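/- Let ψ : S² → S² be a branched covering of degree d ≥ 2 with only simple branch points whose images are pairwise distinct, and suppose some embedded circle C ⊂ S² (target) through exactly two branch values has preimage ψ⁻¹(C) that does not separate S² (domain). Then the monodromy of ψ around each point of C ∩ {branch values} is trivial, contradicting that these are branch values; hence ψ⁻¹(C) separates S² whenever C passes through branch values with nontrivial monodromy. -/

import Mathlib

noncomputable section
open Metric Set

abbrev E3 := EuclideanSpace ℝ (Fin 3)
/-- The round 2-sphere, as the unit sphere of `ℝ³`. -/
abbrev S2 := Metric.sphere (0 : E3) 1

/-- A proper `d`-sheeted branched covering with simple branch points. -/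
structure SimpleBranchedCover (X Y : Type*) [TopologicalSpace X]
    [TopologicalSpace Y] (d : ℕ) where
  toFun : X → Y
  continuous_toFun : Continuous toFun
  proper : IsProperMap toFun
  branchPoints : Set X
  finite_branchPoints : branchPoints.Finite
  isCovering : IsCoveringMap
    (fun x : (toFun ⁻¹' ((toFun '' branchPoints)ᶜ) : Set X) =>
      (⟨toFun x.1, x.2⟩ : ((toFun '' branchPoints)ᶜ : Set Y)))
  degree_eq : ∀ y : Y, y ∉ toFun '' branchPoints → Nat.card (toFun ⁻¹' {y}) = d
  simple_branch : ∀ x ∈ branchPoints, ∃ U ∈ nhds x,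
    ∀ᶠ y in nhds (toFun x), y ≠ toFun x →
      Nat.card {z : X | z ∈ U ∧ toFun z = y} = 2

/-!
As `ψ` is continuous and surjective, it maps the complement of `ψ⁻¹(C)` onto the complement of `C`,
which is disconnected by the separation half of the Jordan curve theorem.

For the latter, split the circle into two arcs joining two of its points, and choose a coordinate on
the sphere with its pole at one of these points and its zero at the other. Contracting an arc onto
the pole shows that the coordinate has a continuous logarithm off that arc. If the complement of the
circle were preconnected, the logarithms for the two arcs would differ there by a constant, so they
would glue to a continuous logarithm of `z` on the punctured plane, which does not exist.
-/

open Function Module OnePoint Topology unitInterval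

section ContinuousLog

variable {X Y : Type*} [TopologicalSpace X] [TopologicalSpace Y]

lemma eqOn_of_exp_comp_eqOn {L₁ L₂ : X → ℂ} {s : Set X} (hs : IsPreconnected s)
    (h₁ : ContinuousOn L₁ s) (h₂ : ContinuousOn L₂ s)
    (hexp : EqOn (Complex.exp ∘ L₁) (Complex.exp ∘ L₂) s) {a : X} (ha : a ∈ s)
    (hLa : L₁ a = L₂ a) : EqOn L₁ L₂ s :=
  Complex.isCoveringMap_exp.eqOn_of_comp_eqOn hs h₁ h₂ (fun _ hx ↦ Subtype.ext (hexp hx)) ha hLa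

/-- `f` has a continuous branch of the logarithm on `s`. Only the values of the branch on `s`
matter; it is total so that branches on different sets can be compared. -/
def HasContinuousLogOn (f : X → ℂ) (s : Set X) : Prop :=
  ∃ L : X → ℂ, ContinuousOn L s ∧ EqOn (Complex.exp ∘ L) f s

namespace HasContinuousLogOn

variable {f : X → ℂ} {s t : Set X}

lemma of_subtype (L : C(s, ℂ)) (hL : ∀ x : s, Complex.exp (L x) = f x) :
    HasContinuousLogOn f s := by
  have hext : ∀ x : s, extend Subtype.val L 0 x = L x := Subtype.val_injective.extend_apply L 0
  refine ⟨extend Subtype.val L 0, ?_, fun x hx ↦ ?_⟩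
  · exact continuousOn_iff_continuous_domRestrict.2 (L.continuous.congr fun x ↦ (hext x).symm)
  · rw [comp_apply, hext ⟨x, hx⟩, hL]

lemma comp {g : Y → X} {u : Set Y} (hf : HasContinuousLogOn f s) (hg : ContinuousOn g u)
    (hgu : MapsTo g u s) : HasContinuousLogOn (f ∘ g) u :=
  let ⟨L, hL, hLf⟩ := hf
  ⟨L ∘ g, hL.comp hg hgu, fun _ hx ↦ hLf (hgu hx)⟩

lemma const_mul (hf : HasContinuousLogOn f s) {c : ℂ} (hc : c ≠ 0) :
    HasContinuousLogOn (fun x ↦ c * f x) s := by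
  obtain ⟨L, hL, hLf⟩ := hf
  refine ⟨fun x ↦ Complex.log c + L x, continuousOn_const.add hL, fun x hx ↦ ?_⟩
  simp only [comp_apply, Complex.exp_add, Complex.exp_log hc, ← hLf hx]

lemma of_homotopy {H : I × X → ℂ} (h₀ : HasContinuousLogOn (fun x ↦ H (0, x)) s)
    (hH : ContinuousOn H (univ ×ˢ s)) (hne : ∀ t, ∀ x ∈ s, H (t, x) ≠ 0) :
    HasContinuousLogOn (fun x ↦ H (1, x)) s := by
  obtain ⟨L, hL, hLH⟩ := h₀
  let L₀ : C(s, ℂ) := ⟨s.domRestrict L, hL.domRestrict⟩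
  let H' : C(I × s, {z : ℂ // z ≠ 0}) :=
    ⟨fun x ↦ ⟨H (x.1, x.2), hne x.1 x.2 x.2.2⟩,
      (hH.comp_continuous (by fun_prop) fun x ↦ ⟨mem_univ _, x.2.2⟩).subtype_mk _⟩
  have hL₀ : ∀ x : s, H' (0, x) = ⟨Complex.exp (L₀ x), Complex.exp_ne_zero _⟩ :=
    fun x ↦ Subtype.ext (hLH x.2).symm
  have hlift := Complex.isCoveringMap_exp.liftHomotopy_lifts H' L₀ hL₀
  exact of_subtype
    ((Complex.isCoveringMap_exp.liftHomotopy H' L₀ hL₀).comp (.prodMk (.const s 1) (.id s)))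
    fun x ↦ congrArg Subtype.val (congrFun hlift (1, x))

lemma union (hs : IsOpen s) (ht : IsOpen t) (hst : IsPreconnected (s ∩ t))
    (hfs : HasContinuousLogOn f s) (hft : HasContinuousLogOn f t) :
    HasContinuousLogOn f (s ∪ t) := by
  classical
  obtain ⟨L₁, hL₁, hLf₁⟩ := hfs
  obtain ⟨L₂, hL₂, hLf₂⟩ := hft
  obtain ⟨c, hc, hL⟩ : ∃ c, Complex.exp c = 1 ∧ EqOn L₁ (fun x ↦ L₂ x + c) (s ∩ t) := by
    rcases (s ∩ t).eq_empty_or_nonempty with hempty | ⟨a, has, hat⟩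
    · exact ⟨0, Complex.exp_zero, by simp [hempty]⟩
    have hc : Complex.exp (L₁ a - L₂ a) = 1 := by
      rw [Complex.exp_sub, div_eq_one_iff_eq (Complex.exp_ne_zero _)]
      exact (hLf₁ has).trans (hLf₂ hat).symm
    refine ⟨L₁ a - L₂ a, hc, eqOn_of_exp_comp_eqOn hst (hL₁.mono inter_subset_left)
      ((hL₂.mono inter_subset_right).add continuousOn_const) (fun x hx ↦ ?_) ⟨has, hat⟩
      (add_sub_cancel _ _).symm⟩
    rw [hLf₁ hx.1, comp_apply, Complex.exp_add, hc, mul_one, ← hLf₂ hx.2, comp_apply]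
  have hpiece : EqOn (s.piecewise L₁ fun x ↦ L₂ x + c) (fun x ↦ L₂ x + c) t := fun x hx ↦ by
    by_cases hxs : x ∈ s
    · rw [s.piecewise_eq_of_mem _ _ hxs, hL ⟨hxs, hx⟩]
    · exact s.piecewise_eq_of_notMem _ _ hxs
  refine ⟨s.piecewise L₁ fun x ↦ L₂ x + c, ?_, ?_⟩
  · exact (hL₁.congr (s.piecewise_eqOn _ _)).union_of_isOpen
      ((hL₂.add continuousOn_const).congr hpiece) hs ht
  · rintro x (hx | hx)
    · rw [comp_apply, s.piecewise_eq_of_mem _ _ hx, ← hLf₁ hx, comp_apply]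
    · rw [comp_apply, hpiece hx, Complex.exp_add, hc, mul_one, ← hLf₂ hx, comp_apply]

end HasContinuousLogOn

lemma not_hasContinuousLogOn_id : ¬ HasContinuousLogOn (id : ℂ → ℂ) {0}ᶜ := by
  rintro ⟨L, hL, hLid⟩
  have hLexp : ∀ w, Complex.exp (L (Complex.exp w)) = Complex.exp w :=
    fun w ↦ hLid (Complex.exp_ne_zero w)
  have hL1 : Complex.exp (L 1) = 1 := hLid one_ne_zero
  have hcont : Continuous fun w ↦ L (Complex.exp w) :=
    hL.comp_continuous Complex.continuous_exp Complex.exp_ne_zero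
  have hlin : EqOn (fun w ↦ L (Complex.exp w)) (fun w ↦ w + L 1) univ :=
    eqOn_of_exp_comp_eqOn isPreconnected_univ hcont.continuousOn (by fun_prop)
      (fun w _ ↦ by simp only [comp_apply, hLexp, Complex.exp_add, hL1, mul_one])
      (mem_univ 0) (by rw [Complex.exp_zero, zero_add])
  have hperiod : L 1 = 2 * Real.pi * Complex.I + L 1 := by
    simpa using hlin (mem_univ (2 * Real.pi * Complex.I))
  exact Complex.two_pi_I_ne_zero (right_eq_add.1 hperiod)

end ContinuousLog

section Path

variable {X : Type*} [TopologicalSpace X] {a b x : X} {γ : Path a b}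

lemma path_ne_source (hγ : Injective γ) {t : I} (ht : 0 < t) : γ t ≠ a :=
  fun h ↦ ht.ne' (hγ (h.trans γ.source.symm))

lemma path_ne_target (hγ : Injective γ) {t : I} (ht : t < 1) : γ t ≠ b :=
  fun h ↦ ht.ne (hγ (h.trans γ.target.symm))

lemma ne_source_of_notMem_range (hx : x ∉ range γ) : x ≠ a :=
  fun h ↦ hx (h ▸ γ.source_mem_range)

end Path

section RiemannSphere

/-- The standard coordinate on the Riemann sphere. With the value `0` at the pole `∞`, the
convention `0⁻¹ = 0` makes its pointwise inverse the coordinate centred at `∞`. -/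
def affineCoord (z : OnePoint ℂ) : ℂ := z.elim 0 id

@[simp]
lemma affineCoord_coe (z : ℂ) : affineCoord z = z := rfl

@[simp]
lemma affineCoord_infty : affineCoord ∞ = 0 := rfl

lemma injOn_affineCoord : InjOn affineCoord {∞}ᶜ := by
  intro x hx y hy hxy
  lift x to ℂ using hx
  lift y to ℂ using hy
  exact congrArg _ hxy

lemma affineCoord_ne_zero {z : OnePoint ℂ} (hz₀ : z ≠ (0 : ℂ)) (hz : z ≠ ∞) :
    affineCoord z ≠ 0 := by
  lift z to ℂ using hz
  exact fun h ↦ hz₀ (congrArg _ h)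

lemma continuousOn_affineCoord : ContinuousOn affineCoord {∞}ᶜ := by
  refine continuousOn_of_forall_continuousAt fun x hx ↦ ?_
  lift x to ℂ using hx
  exact continuousAt_coe.2 continuousAt_id

lemma continuousOn_affineCoord_inv :
    ContinuousOn (fun x ↦ (affineCoord x)⁻¹) {((0 : ℂ) : OnePoint ℂ)}ᶜ := by
  refine continuousOn_of_forall_continuousAt fun x hx ↦ ?_
  induction x with
  | infty =>
    rw [continuousAt_infty', Filter.coclosedCompact_eq_cocompact, ← Metric.cobounded_eq_cocompact]
    simpa using! Filter.tendsto_inv₀_cobounded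
  | coe x => exact continuousAt_coe.2 (continuousAt_inv₀ (by simpa using hx))

/-- The homotopy that contracts an arc `γ` from `∞` to `0` onto its endpoint `∞`: for `t` from `1`
down to `m`, the zero of the coordinate moves along `γ` from `0` to `γ m` with the pole fixed at
`∞`; below `m`, the zero moves on from `γ m` to `∞`, where it cancels the pole. The factors
depending only on `t` make the function at time `0` the constant `-1`. -/
def arcHomotopy (γ : Path (∞ : OnePoint ℂ) (0 : ℂ)) (m : I) (p : I × OnePoint ℂ) : ℂ :=
  affineCoord p.2 * (affineCoord (γ (min p.1 m)))⁻¹ -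
    affineCoord (γ (max p.1 m)) * (affineCoord (γ m))⁻¹

section Arc

variable {γ : Path (∞ : OnePoint ℂ) (0 : ℂ)} {m : I}

lemma affineCoord_ne_of_notMem_range {x : OnePoint ℂ} (hx : x ∉ range γ) {t : I} (ht : γ t ≠ ∞) :
    affineCoord x ≠ affineCoord (γ t) :=
  fun h ↦ hx ⟨t, (injOn_affineCoord (ne_source_of_notMem_range hx) ht h).symm⟩

lemma continuousOn_arcHomotopy (hγ : Injective γ) (hm₀ : 0 < m) (hm₁ : m < 1) :
    ContinuousOn (arcHomotopy γ m) (univ ×ˢ {∞}ᶜ) := by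
  have hpole : Continuous fun p : I × OnePoint ℂ ↦ (affineCoord (γ (min p.1 m)))⁻¹ :=
    continuousOn_affineCoord_inv.comp_continuous (f := fun p : I × OnePoint ℂ ↦ γ (min p.1 m))
      (by fun_prop) fun p ↦ path_ne_target hγ (min_lt_of_right_lt hm₁)
  have hzero : Continuous fun p : I × OnePoint ℂ ↦ affineCoord (γ (max p.1 m)) :=
    continuousOn_affineCoord.comp_continuous (by fun_prop)
      fun p ↦ path_ne_source hγ (lt_max_of_lt_right hm₀)
  have hcoord : ContinuousOn (fun p : I × OnePoint ℂ ↦ affineCoord p.2) (univ ×ˢ {∞}ᶜ) :=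
    continuousOn_affineCoord.comp continuousOn_snd fun p hp ↦ hp.2
  exact (hcoord.mul hpole.continuousOn).sub (hzero.mul_const _).continuousOn

lemma arcHomotopy_ne_zero (hγ : Injective γ) (hm₀ : 0 < m) (hm₁ : m < 1) (t : I) {x : OnePoint ℂ}
    (hx : x ∉ range γ) : arcHomotopy γ m (t, x) ≠ 0 := by
  have hγm : affineCoord (γ m) ≠ 0 := affineCoord_ne_zero (path_ne_target hγ hm₁)
    (path_ne_source hγ hm₀)
  rcases le_total t m with htm | hmt
  · rw [arcHomotopy, min_eq_left htm, max_eq_right htm, mul_inv_cancel₀ hγm, sub_ne_zero]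
    rcases eq_or_ne (γ t) ∞ with ht | ht
    · simp [ht]
    · have hγt : affineCoord (γ t) ≠ 0 :=
        affineCoord_ne_zero (path_ne_target hγ (htm.trans_lt hm₁)) ht
      rw [← div_eq_mul_inv, Ne, div_eq_one_iff_eq hγt]
      exact affineCoord_ne_of_notMem_range hx ht
  · rw [arcHomotopy, min_eq_right hmt, max_eq_left hmt, ← sub_mul]
    exact mul_ne_zero (sub_ne_zero.2 <| affineCoord_ne_of_notMem_range hx <|
      path_ne_source hγ (hm₀.trans_le hmt)) (inv_ne_zero hγm)

lemma hasContinuousLogOn_affineCoord_compl_range (hγ : Injective γ) :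
    HasContinuousLogOn affineCoord (range γ)ᶜ := by
  obtain ⟨m, hm₀, hm₁⟩ := exists_between (zero_lt_one (α := I))
  have hγm : affineCoord (γ m) ≠ 0 := affineCoord_ne_zero (path_ne_target hγ hm₁)
    (path_ne_source hγ hm₀)
  have hsub : (range γ)ᶜ ⊆ {∞}ᶜ := fun _ ↦ ne_source_of_notMem_range
  have hstart : HasContinuousLogOn (fun x ↦ arcHomotopy γ m (0, x)) (range γ)ᶜ :=
    ⟨fun _ ↦ Complex.log (-1), continuousOn_const, fun x _ ↦ by
      simp [arcHomotopy, hm₀.le, hγm, Complex.exp_log]⟩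
  have hend : HasContinuousLogOn (fun x ↦ arcHomotopy γ m (1, x)) (range γ)ᶜ :=
    hstart.of_homotopy ((continuousOn_arcHomotopy hγ hm₀ hm₁).mono (prod_mono_right hsub))
      fun t _ ↦ arcHomotopy_ne_zero hγ hm₀ hm₁ t
  have hcoord : affineCoord = fun x ↦ affineCoord (γ m) * arcHomotopy γ m (1, x) := by
    ext x
    simp [arcHomotopy, hm₁.le, hγm, mul_left_comm]
  rw [hcoord]
  exact hend.const_mul hγm

end Arc

lemma not_isPreconnected_compl_union_of_hasContinuousLogOn {A B : Set (OnePoint ℂ)}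
    (hA : IsClosed A) (hB : IsClosed B) (hAB : A ∩ B ⊆ {∞, ((0 : ℂ) : OnePoint ℂ)})
    (hlogA : HasContinuousLogOn affineCoord Aᶜ) (hlogB : HasContinuousLogOn affineCoord Bᶜ) :
    ¬ IsPreconnected (A ∪ B)ᶜ := by
  intro hpre
  rw [compl_union] at hpre
  have hlog := hlogA.union hA.isOpen_compl hB.isOpen_compl hpre hlogB
  refine not_hasContinuousLogOn_id (hlog.comp continuous_coe.continuousOn fun z hz ↦ ?_)
  rw [← compl_inter]
  exact fun hzAB ↦ (hAB hzAB).elim (coe_ne_infty z) (fun h ↦ hz (coe_injective h))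

lemma not_isPreconnected_compl_range_of_eq_infty_of_eq_zero {h : Circle → OnePoint ℂ}
    (hc : Continuous h) (hi : Injective h) {x y : Circle} (hx : h x = ∞) (hy : h y = (0 : ℂ)) :
    ¬ IsPreconnected (range h)ᶜ := by
  have hxy : x ≠ y := fun hxy ↦ coe_ne_infty (0 : ℂ) (by rw [← hy, ← hxy, hx])
  let γ₁ : Path (∞ : OnePoint ℂ) (0 : ℂ) := ((x.path y).map hc).cast hx.symm hy.symm
  let γ₂ : Path (∞ : OnePoint ℂ) (0 : ℂ) := ((y.path x).symm.map hc).cast hx.symm hy.symm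
  have hγ₁ : Injective γ₁ := hi.comp (Circle.path_injective_of_ne hxy)
  have hγ₂ : Injective γ₂ :=
    hi.comp ((Circle.path_injective_of_ne hxy.symm).comp symm_bijective.injective)
  have hrange₁ : range γ₁ = h '' range (x.path y) := range_comp h _
  have hrange₂ : range γ₂ = h '' range (y.path x) := by
    rw [← Path.symm_range (y.path x)]
    exact range_comp h _
  have hunion : range γ₁ ∪ range γ₂ = range h := by
    rw [hrange₁, hrange₂, ← image_union, Circle.range_path_union_range_path hxy, image_univ]
  have hinter : range γ₁ ∩ range γ₂ = {∞, ((0 : ℂ) : OnePoint ℂ)} := by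
    rw [hrange₁, hrange₂, ← image_inter hi, Circle.range_path_inter_range_path hxy, image_pair,
      hx, hy]
  rw [← hunion]
  exact not_isPreconnected_compl_union_of_hasContinuousLogOn
    (isCompact_range γ₁.continuous).isClosed (isCompact_range γ₂.continuous).isClosed hinter.subset
    (hasContinuousLogOn_affineCoord_compl_range hγ₁)
    (hasContinuousLogOn_affineCoord_compl_range hγ₂)

end RiemannSphere

section Sphere

variable {E : Type*} [NormedAddCommGroup E] [InnerProductSpace ℝ E]

lemma exists_homeomorph_sphere_onePoint {V : Type*} [NormedAddCommGroup V] [NormedSpace ℝ V]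
    [FiniteDimensional ℝ V] (hVE : finrank ℝ E = finrank ℝ V + 1) {p q : sphere (0 : E) 1}
    (hpq : p ≠ q) :
    ∃ φ : sphere (0 : E) 1 ≃ₜ OnePoint V, φ p = ∞ ∧ φ q = ((0 : V) : OnePoint V) := by
  have : FiniteDimensional ℝ E := .of_finrank_pos (by lia)
  have : Fact (finrank ℝ E = finrank ℝ V + 1) := ⟨hVE⟩
  let e : V ≃L[ℝ] (ℝ ∙ (p : E))ᗮ := .ofFinrankEq
    (Submodule.finrank_orthogonal_span_singleton (ne_zero_of_mem_unit_sphere p)).symm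
  let φ : OnePoint V ≃ₜ sphere (0 : E) 1 := e.toHomeomorph.onePointCongr.trans
    (onePointHyperplaneHomeoUnitSphere (norm_eq_of_mem_sphere p))
  have hφ : φ ∞ = p := rfl
  obtain ⟨v, hv⟩ : ∃ v : V, (v : OnePoint V) = φ.symm q :=
    ne_infty_iff_exists.1 fun h ↦ hpq (by rw [← hφ, ← h, φ.apply_symm_apply])
  refine ⟨φ.symm.trans (Homeomorph.subRight v).onePointCongr, ?_, ?_⟩
  · simp [← hφ]
  · simp [← hv]

theorem not_isPreconnected_compl_range_circle (hE : finrank ℝ E = 3)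
    {h : Circle → sphere (0 : E) 1} (hc : Continuous h) (hi : Injective h) :
    ¬ IsPreconnected (range h)ᶜ := by
  intro hpre
  have hne : (1 : Circle) ≠ -1 := (Circle.neg_ne_self 1).symm
  obtain ⟨φ, hφ, hφ₀⟩ := exists_homeomorph_sphere_onePoint (V := ℂ) (by simp [hE]) (hi.ne hne)
  refine not_isPreconnected_compl_range_of_eq_infty_of_eq_zero (φ.continuous.comp hc)
    (φ.injective.comp hi) hφ hφ₀ ?_
  rw [range_comp, ← φ.image_compl]
  exact hpre.image φ φ.continuous.continuousOn

theorem preimage_of_circle_separates_general {X : Type*} [TopologicalSpace X]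
    (hE : finrank ℝ E = 3) {ψ : X → sphere (0 : E) 1} (hψ : Continuous ψ) (hsurj : Surjective ψ)
    {C : Set (sphere (0 : E) 1)} (hC : Nonempty (C ≃ₜ Circle)) :
    ¬ IsPreconnected (ψ ⁻¹' C)ᶜ := by
  intro hpre
  obtain ⟨g⟩ := hC
  have hrange : range (Subtype.val ∘ g.symm) = C := by
    rw [g.symm.surjective.range_comp, Subtype.range_coe]
  refine not_isPreconnected_compl_range_circle hE
    (continuous_subtype_val.comp g.symm.continuous)
    (Subtype.val_injective.comp g.symm.injective) ?_
  rw [hrange, ← image_preimage_eq Cᶜ hsurj, preimage_compl]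
  exact hpre.image _ hψ.continuousOn

end Sphere

lemma SimpleBranchedCover.surjective {X Y : Type*} [TopologicalSpace X] [TopologicalSpace Y]
    {d : ℕ} (ψ : SimpleBranchedCover X Y d) (hd : d ≠ 0) : Surjective ψ.toFun := by
  intro y
  by_cases hy : y ∈ ψ.toFun '' ψ.branchPoints
  · exact image_subset_range _ _ hy
  · have hcard : Nat.card (ψ.toFun ⁻¹' {y}) ≠ 0 := by rwa [ψ.degree_eq y hy]
    obtain ⟨⟨x, hx⟩⟩ := (Nat.card_ne_zero.1 hcard).1
    exact ⟨x, hx⟩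

/-- Monodromy/separation.  Let `ψ : S² → S²` be a branched
covering of degree `d ≥ 2` with simple branch points whose images are pairwise
distinct.  If `C` is an embedded circle in the target passing through exactly
two branch values, then `ψ⁻¹(C)` separates the domain sphere: its complement
is disconnected.  (If `ψ⁻¹(C)` did not separate, the monodromy around each
branch value on `C` would be trivial, contradicting that it is a branch
value.) -/
theorem preimage_of_circle_separates (d : ℕ) (hd : 2 ≤ d)
    (ψ : SimpleBranchedCover S2 S2 d)
    (hinj : Set.InjOn ψ.toFun ψ.branchPoints)
    (C : Set S2) (hC : Nonempty (C ≃ₜ Circle))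
    (hC2 : (C ∩ ψ.toFun '' ψ.branchPoints).ncard = 2) :
    ¬ IsPreconnected ((ψ.toFun ⁻¹' C)ᶜ : Set S2) := by
  exact preimage_of_circle_separates_general finrank_euclideanSpace_fin ψ.continuous_toFun
    (ψ.surjective (by lia)) hC
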